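/- For any quaternions u₁, u, u₂ over ℝ, the Gram determinant of the imaginary parts equals the square of the scalar triple product: det G' = ⟪cross u₁ u, u₂⟫², where G' is the 3×3 Gram matrix of the vectors u₁' = u₁ - (u₁.re) • 1, u' = u - (u.re) • 1, u₂' = u₂ - (u₂.re) • 1, i.e. G' = !![⟪u₁',u₁'⟫, ⟪u₁',u'⟫, ⟪u₁',u₂'⟫; ⟪u₁',u'⟫, ⟪u',u'⟫, ⟪u',u₂'⟫; ⟪u₁',u₂'⟫, ⟪u',u₂'⟫, ⟪u₂',u₂'⟫], and cross a b := (a * b - b * a) / 2. -/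

import Mathlib

/-!
In the coordinates `(imI, imJ, imK)`, the quaternionic cross product is the usual cross product of
the imaginary parts, so `⟪cross u₁ u, u₂⟫` is the determinant of the matrix `A` whose rows are the
three imaginary parts. Their Gram matrix is `A * Aᵀ`, of determinant `A.det ^ 2`.
-/

open Quaternion RealInnerProductSpace Matrix

/-- The cross product of two quaternions. -/
noncomputable def cross (a b : ℍ) : ℍ := (a * b - b * a) / 2

section CommRing

variable {R : Type*} [CommRing R]

/-- The coordinate vector of the imaginary part of a quaternion, as a linear map to `Fin 3 → R`,
where Mathlib's dot product, cross product and determinants are available. -/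
def imVec : ℍ[R] →ₗ[R] Fin 3 → R where
  toFun a := ![a.imI, a.imJ, a.imK]
  map_add' a b := by simp
  map_smul' r a := by simp

theorem imVec_apply (a : ℍ[R]) : imVec a = ![a.imI, a.imJ, a.imK] := rfl

theorem imVec_im (a : ℍ[R]) : imVec a.im = imVec a := rfl

theorem re_mul_sub_mul_comm (a b : ℍ[R]) : (a * b - b * a).re = 0 := by
  simp only [re_sub, re_mul]
  ring

theorem imVec_mul_sub_mul_comm (a b : ℍ[R]) :
    imVec (a * b - b * a) = (2 : R) • (imVec a ⨯₃ imVec b) := by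
  ext i
  fin_cases i <;> simp [imVec_apply, cross_apply] <;> ring

theorem sub_re_smul_one (a : ℍ[R]) : a - a.re • (1 : ℍ[R]) = a.im := by
  rw [← Algebra.algebraMap_eq_smul_one, algebraMap_def, sub_re_self]

end CommRing

theorem inner_eq_re_mul_re_add_dotProduct (a b : ℍ) :
    ⟪a, b⟫ = a.re * b.re + imVec a ⬝ᵥ imVec b := by
  simp only [inner_def, re_mul, re_star, imI_star, imJ_star, imK_star, imVec_apply,
    vec3_dotProduct, cons_val]
  ring

theorem gram_im_eq_mul_transpose {n : Type*} (v : n → ℍ) :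
    gram ℝ (fun i ↦ (v i).im) = of (fun i ↦ imVec (v i)) * (of fun i ↦ imVec (v i))ᵀ := by
  ext i j
  rw [gram_apply, inner_eq_re_mul_re_add_dotProduct, re_im, zero_mul, zero_add, imVec_im, imVec_im]
  rfl

theorem cross_eq_smul (a b : ℍ) : cross a b = (2⁻¹ : ℝ) • (a * b - b * a) := by
  have inv_two : (2 : ℍ)⁻¹ = ((2⁻¹ : ℝ) : ℍ) := (coe_inv 2).symm
  rw [cross, div_eq_mul_inv, inv_two, mul_coe_eq_smul]

theorem re_cross (a b : ℍ) : (cross a b).re = 0 := by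
  rw [cross_eq_smul, re_smul, re_mul_sub_mul_comm, smul_zero]

theorem imVec_cross (a b : ℍ) : imVec (cross a b) = imVec a ⨯₃ imVec b := by
  rw [cross_eq_smul, map_smul, imVec_mul_sub_mul_comm, inv_smul_smul₀ two_ne_zero]

theorem inner_cross_eq_det (a b c : ℍ) :
    ⟪cross a b, c⟫ = det ![imVec a, imVec b, imVec c] := by
  rw [inner_eq_re_mul_re_add_dotProduct, re_cross, zero_mul, zero_add, imVec_cross,
    dotProduct_comm, triple_product_permutation, triple_product_eq_det]

theorem quaternion_imaginary_gram_det (u₁ u u₂ : ℍ) :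
    Matrix.det
      !![⟪u₁ - u₁.re • (1 : ℍ), u₁ - u₁.re • (1 : ℍ)⟫, ⟪u₁ - u₁.re • (1 : ℍ), u - u.re • (1 : ℍ)⟫,
           ⟪u₁ - u₁.re • (1 : ℍ), u₂ - u₂.re • (1 : ℍ)⟫;
         ⟪u₁ - u₁.re • (1 : ℍ), u - u.re • (1 : ℍ)⟫, ⟪u - u.re • (1 : ℍ), u - u.re • (1 : ℍ)⟫,
           ⟪u - u.re • (1 : ℍ), u₂ - u₂.re • (1 : ℍ)⟫;
         ⟪u₁ - u₁.re • (1 : ℍ), u₂ - u₂.re • (1 : ℍ)⟫, ⟪u - u.re • (1 : ℍ), u₂ - u₂.re • (1 : ℍ)⟫,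
           ⟪u₂ - u₂.re • (1 : ℍ), u₂ - u₂.re • (1 : ℍ)⟫] =
      ⟪cross u₁ u, u₂⟫ ^ 2 := by
  let v : Fin 3 → ℍ := ![u₁, u, u₂]
  have det_rows : det (of fun i ↦ imVec (v i)) = ⟪cross u₁ u, u₂⟫ := by
    rw [inner_cross_eq_det]
    congr 1
    ext i : 1
    fin_cases i <;> rfl
  simp only [sub_re_smul_one]
  calc
    _ = det (gram ℝ fun i ↦ (v i).im) := by
      rw [eta_fin_three (gram ℝ _)]
      simp only [gram_apply, v, cons_val, real_inner_comm]
    _ = det (of fun i ↦ imVec (v i)) ^ 2 := by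
      rw [gram_im_eq_mul_transpose, det_mul, det_transpose, sq]
    _ = ⟪cross u₁ u, u₂⟫ ^ 2 := by rw [det_rows]
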